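/- For real $\mu\ge 0$ and $z>0$ let $J_\mu(z)=\sum_{m=0}^\infty \frac{(-1)^m}{m!\,\Gamma(\mu+m+1)}\left(\frac z2\right)^{\mu+2m}$ be the Bessel function of the first kind of order $\mu$. Let $j_{\mu,1}$ denote the first positive zero of $J_\mu$. For $\mu>0$ let $j'_{\mu,1}$ denote the first positive zero of $J_\mu'$; for $\mu=0$ use the usual convention that the zero of $J_0'$ at the origin is counted first, i.e. $j'_{0,1}=0$. Let $\nu$ be a real number with $\nu\ge 1$. Then the function $z\mapsto J_{\nu-1}(z)-J_\nu(z)$ has exactly one zero in the open interval $(0,j_{\nu-1,1})$, namely its first positive zero $\lambda^-_{\nu-1,1}$, and this zero satisfies both $$j'_{\nu-1,1}<\lambda^-_{\nu-1,1}<j_{\nu-1,1}\qquad\text{and}\qquad \nu<\lambda^-_{\nu-1,1}<j'_{\nu,1}<j_{\nu,1}.$$ -/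

import Mathlib

/-- Bessel function of the first kind of real order `ν`, for `z > 0`, given by its power series
`J_ν(z) = ∑ₘ (−1)^m / (m! Γ(ν+m+1)) (z/2)^(ν+2m)` (real-exponent powers). -/
noncomputable def besselJ (ν z : ℝ) : ℝ :=
  ∑' m : ℕ, ((-1 : ℝ) ^ m / (Nat.factorial m * Real.Gamma (ν + m + 1))) *
    (z / 2) ^ (ν + 2 * (m : ℝ))

/-- The set of positive zeroes of `f`. -/
def posZeros (f : ℝ → ℝ) : Set ℝ := {z | 0 < z ∧ f z = 0}

/-- The zeroes of `J_μ′` that are counted by `j′_{μ,1}, j′_{μ,2}, …`: the positive zeroes and,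
for the order `μ = 0` only, also the zero of `J_0′` at the origin. This is the usual convention
`j′_{0,1} = 0`. -/
def derivZeros (μ : ℝ) : Set ℝ :=
  {z | z ∈ posZeros (deriv (besselJ μ)) ∨ (μ = 0 ∧ z = 0)}

/-- `x` is the `k`-th element (`k = 1, 2, …`) of `S` in increasing order: `x` lies in `S` and
exactly `k - 1` elements of `S` lie below it. -/
def IsKthElement (S : Set ℝ) (k : ℕ) (x : ℝ) : Prop :=
  x ∈ S ∧ (S ∩ Set.Iio x).encard + 1 = k

open Set Filter Topology

/-- The coefficients of the entire function `g_ν` with `J_ν(z) = (z/2)^ν g_ν(z²/4)`. -/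
noncomputable def besselCoeff (ν : ℝ) (m : ℕ) : ℝ :=
  (-1 : ℝ) ^ m / (Nat.factorial m * Real.Gamma (ν + m + 1))

/-- The entire function `g_ν` with `J_ν(z) = (z/2)^ν g_ν(z²/4)`. -/
noncomputable def besselAux (ν x : ℝ) : ℝ := ∑' m : ℕ, besselCoeff ν m * x ^ m

theorem gamma_add_nat_ge {ν : ℝ} (hν : 0 ≤ ν) (m : ℕ) :
    Real.Gamma (ν + 1) ≤ Real.Gamma (ν + m + 1) := by
  induction m with
  | zero => simp
  | succ k ih =>
    have h1 : ν + (k + 1 : ℕ) + 1 = (ν + k + 1) + 1 := by push_cast; ring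
    have hpos : 0 < ν + k + 1 := by positivity
    rw [h1, Real.Gamma_add_one hpos.ne']
    have hG : 0 < Real.Gamma (ν + k + 1) := Real.Gamma_pos_of_pos hpos
    have hk : (0 : ℝ) ≤ k := k.cast_nonneg
    nlinarith

theorem abs_besselCoeff_le {ν : ℝ} (hν : 0 ≤ ν) (m : ℕ) :
    |besselCoeff ν m| ≤ (Real.Gamma (ν + 1))⁻¹ * (Nat.factorial m : ℝ)⁻¹ := by
  have h0 : 0 < Real.Gamma (ν + 1) := Real.Gamma_pos_of_pos (by positivity)
  have h1 := gamma_add_nat_ge hν m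
  have hf : (0 : ℝ) < Nat.factorial m := by positivity
  have h2 : 0 < Real.Gamma (ν + m + 1) := h0.trans_le h1
  rw [besselCoeff, abs_div, abs_pow, abs_neg, abs_one, one_pow,
    abs_of_pos (mul_pos hf h2), one_div, ← mul_inv, mul_comm (Real.Gamma (ν + 1))]
  gcongr

theorem summable_besselCoeff {ν : ℝ} (hν : 0 ≤ ν) (x : ℝ) :
    Summable fun m : ℕ => besselCoeff ν m * x ^ m := by
  refine Summable.of_norm_bounded
    (g := fun m : ℕ => (Real.Gamma (ν + 1))⁻¹ * (|x| ^ m / Nat.factorial m))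
    ((Real.summable_pow_div_factorial |x|).mul_left _) fun m => ?_
  rw [Real.norm_eq_abs, abs_mul, abs_pow, div_eq_inv_mul, ← mul_assoc]
  exact mul_le_mul_of_nonneg_right (abs_besselCoeff_le hν m) (by positivity)

theorem besselCoeff_succ {ν : ℝ} (m : ℕ) :
    besselCoeff ν (m + 1) * (m + 1) = -besselCoeff (ν + 1) m := by
  have h1 : ν + ((m + 1 : ℕ) : ℝ) + 1 = ν + 1 + m + 1 := by push_cast; ring
  have hm : (m : ℝ) + 1 ≠ 0 := by positivity
  rw [besselCoeff, besselCoeff, h1, Nat.factorial_succ]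
  push_cast
  rw [pow_succ, mul_assoc ((m : ℝ) + 1)]
  rw [← div_div, div_right_comm, div_mul_cancel₀ _ hm]
  ring

theorem hasDerivAt_besselAux {ν : ℝ} (hν : 0 ≤ ν) (x : ℝ) :
    HasDerivAt (besselAux ν) (-besselAux (ν + 1) x) x := by
  have hR : 0 < |x| + 1 := by positivity
  set R := |x| + 1 with hRdef
  have hC : 0 < Real.Gamma (ν + 1) := Real.Gamma_pos_of_pos (by positivity)
  have hu : Summable fun m : ℕ =>
      (Real.Gamma (ν + 1))⁻¹ * ((m : ℝ) * R ^ (m - 1) / Nat.factorial m) := by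
    refine Summable.mul_left _ ((summable_nat_add_iff 1).mp ?_)
    refine (Real.summable_pow_div_factorial R).congr fun m => ?_
    have hm : (m : ℝ) + 1 ≠ 0 := by positivity
    rw [Nat.factorial_succ]
    push_cast
    rw [mul_div_mul_left _ _ hm]
  have key := hasDerivAt_tsum_of_isPreconnected
    (g := fun (m : ℕ) (y : ℝ) => besselCoeff ν m * y ^ m)
    (g' := fun (m : ℕ) (y : ℝ) => besselCoeff ν m * ((m : ℝ) * y ^ (m - 1)))
    (t := Metric.ball 0 R) (y₀ := 0) (y := x) hu Metric.isOpen_ball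
    (convex_ball 0 R).isPreconnected
    (fun m y _ => (hasDerivAt_pow m y).const_mul _)
    (fun m y hy => by
      have hy' : |y| ≤ R := by
        have := mem_ball_zero_iff.mp hy
        rw [Real.norm_eq_abs] at this
        exact this.le
      rw [Real.norm_eq_abs, abs_mul, abs_mul, abs_pow, Nat.abs_cast]
      calc |besselCoeff ν m| * ((m : ℝ) * |y| ^ (m - 1))
          ≤ ((Real.Gamma (ν + 1))⁻¹ * (Nat.factorial m : ℝ)⁻¹) * ((m : ℝ) * R ^ (m - 1)) := by
            have := abs_besselCoeff_le hν m
            gcongr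
        _ = _ := by rw [div_eq_inv_mul, mul_assoc])
    (Metric.mem_ball_self hR) (summable_besselCoeff hν 0)
    (by rw [mem_ball_zero_iff, Real.norm_eq_abs, hRdef]; linarith)
  have hd : ∑' m : ℕ, besselCoeff ν m * ((m : ℝ) * x ^ (m - 1)) = -besselAux (ν + 1) x := by
    have hs : Summable fun m : ℕ => besselCoeff ν m * ((m : ℝ) * x ^ (m - 1)) := by
      refine (summable_nat_add_iff 1).mp ?_
      refine (summable_besselCoeff (by positivity : 0 ≤ ν + 1) x).neg.congr fun m => ?_
      rw [Nat.add_sub_cancel, ← mul_assoc]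
      push_cast
      rw [besselCoeff_succ, neg_mul]
    rw [hs.tsum_eq_zero_add, besselAux, ← tsum_neg]
    simp only [Nat.cast_zero, zero_mul, mul_zero, zero_add]
    refine tsum_congr fun m => ?_
    rw [Nat.add_sub_cancel, ← mul_assoc]
    push_cast
    rw [besselCoeff_succ, neg_mul]
  rw [hd] at key
  exact key

theorem continuous_besselAux {ν : ℝ} (hν : 0 ≤ ν) : Continuous (besselAux ν) :=
  continuous_iff_continuousAt.mpr fun x => (hasDerivAt_besselAux hν x).continuousAt

theorem besselAux_zero_pos {ν : ℝ} (hν : 0 ≤ ν) : 0 < besselAux ν 0 := by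
  have : besselAux ν 0 = (Real.Gamma (ν + 1))⁻¹ := by
    rw [besselAux, tsum_eq_single 0 (fun m hm => by simp [hm])]
    simp [besselCoeff]
  rw [this]
  exact inv_pos.mpr (Real.Gamma_pos_of_pos (by positivity))

/-- The three-term recurrence for the auxiliary functions. -/
theorem besselAux_recurrence {ν : ℝ} (hν : 1 ≤ ν) (x : ℝ) :
    besselAux (ν - 1) x = ν * besselAux ν x - x * besselAux (ν + 1) x := by
  have h0 : 0 ≤ ν := by linarith
  have s1 := summable_besselCoeff h0 x
  have s2 := summable_besselCoeff (by linarith : 0 ≤ ν + 1) x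
  have s3 := summable_besselCoeff (by linarith : 0 ≤ ν - 1) x
  have hz : besselCoeff (ν - 1) 0 = ν * besselCoeff ν 0 := by
    have : Real.Gamma (ν + 1) = ν * Real.Gamma ν := Real.Gamma_add_one (by linarith)
    have hν0 : ν ≠ 0 := by linarith
    have hG : Real.Gamma ν ≠ 0 := (Real.Gamma_pos_of_pos (by linarith)).ne'
    simp only [besselCoeff, pow_zero, Nat.factorial_zero, Nat.cast_one, one_mul, Nat.cast_zero,
      add_zero, sub_add_cancel, this]
    field_simp
  have hsucc (m : ℕ) : besselCoeff (ν - 1) (m + 1)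
      = ν * besselCoeff ν (m + 1) - besselCoeff (ν + 1) m := by
    have e1 : ν - 1 + ((m + 1 : ℕ) : ℝ) + 1 = ν + (m + 1) := by push_cast; ring
    have e2 : ν + ((m + 1 : ℕ) : ℝ) + 1 = ν + (m + 1) + 1 := by push_cast; ring
    have hp : 0 < ν + ((m : ℝ) + 1) := by positivity
    have hG := (Real.Gamma_pos_of_pos hp).ne'
    have : besselCoeff (ν - 1) (m + 1) = (ν + (m + 1)) * besselCoeff ν (m + 1) := by
      rw [besselCoeff, besselCoeff, e1, e2, Real.Gamma_add_one hp.ne']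
      have hf : ((Nat.factorial (m + 1) : ℕ) : ℝ) ≠ 0 := by positivity
      field_simp
    rw [this]
    linarith [besselCoeff_succ (ν := ν) m]
  rw [besselAux, s3.tsum_eq_zero_add, besselAux, s1.tsum_eq_zero_add, besselAux, mul_add,
    ← tsum_mul_left, ← tsum_mul_left, hz, add_sub_assoc]
  congr 1
  · ring
  · rw [← Summable.tsum_sub (((summable_nat_add_iff 1).mpr s1).mul_left ν) (s2.mul_left x)]
    refine tsum_congr fun m => ?_
    rw [hsucc]
    ring

theorem besselJ_eq {ν z : ℝ} (hν : 0 ≤ ν) (hz : 0 ≤ z) :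
    besselJ ν z = (z / 2) ^ ν * besselAux ν ((z / 2) ^ 2) := by
  rw [besselJ, besselAux, ← tsum_mul_left]
  refine tsum_congr fun m => ?_
  rw [Real.rpow_add_of_nonneg (by positivity) hν (by positivity)]
  have : (z / 2) ^ (2 * (m : ℝ)) = ((z / 2) ^ 2) ^ m := by
    rw [← pow_mul, ← Real.rpow_natCast]
    push_cast
    rfl
  rw [this, besselCoeff]
  ring

theorem continuousOn_besselJ {ν : ℝ} (hν : 0 ≤ ν) : ContinuousOn (besselJ ν) (Ici 0) := by
  have : Continuous fun z : ℝ => (z / 2) ^ ν * besselAux ν ((z / 2) ^ 2) :=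
    ((continuous_id.div_const 2).rpow_const fun _ => Or.inr hν).mul
      ((continuous_besselAux hν).comp (by fun_prop))
  exact this.continuousOn.congr fun z hz => besselJ_eq hν hz

theorem besselJ_zero_right {ν : ℝ} (hν : 0 < ν) : besselJ ν 0 = 0 := by
  rw [besselJ_eq hν.le le_rfl, zero_div, Real.zero_rpow hν.ne', zero_mul]

/-- `J_ν' = (ν/z) J_ν - J_{ν+1}`. -/
theorem hasDerivAt_besselJ {ν z : ℝ} (hν : 0 ≤ ν) (hz : 0 < z) :
    HasDerivAt (besselJ ν) (ν / z * besselJ ν z - besselJ (ν + 1) z) z := by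
  have h2 : 0 < z / 2 := by positivity
  have hl : HasDerivAt (fun y : ℝ => y / 2) (1 / 2) z := (hasDerivAt_id z).div_const 2
  have h := (hl.rpow_const (p := ν) (Or.inl h2.ne')).mul
    ((hasDerivAt_besselAux hν ((z / 2) ^ 2)).comp z (hl.pow 2))
  have h' : HasDerivAt (fun y : ℝ => (y / 2) ^ ν * besselAux ν ((y / 2) ^ 2))
      (ν / z * besselJ ν z - besselJ (ν + 1) z) z := by
    refine h.congr_deriv ?_
    rw [besselJ_eq hν hz.le, besselJ_eq (by linarith) hz.le, Real.rpow_add_one h2.ne',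
      Real.rpow_sub_one h2.ne']
    simp only [Function.comp_apply, Pi.pow_apply]
    field_simp
    ring
  refine h'.congr_of_eventuallyEq ?_
  filter_upwards [lt_mem_nhds hz] with y hy using besselJ_eq hν hy.le

/-- `J_{ν-1} + J_{ν+1} = (2ν/z) J_ν`. -/
theorem besselJ_recurrence {ν z : ℝ} (hν : 1 ≤ ν) (hz : 0 < z) :
    besselJ (ν + 1) z = 2 * ν / z * besselJ ν z - besselJ (ν - 1) z := by
  have h2 : 0 < z / 2 := by positivity
  rw [besselJ_eq (by linarith) hz.le, besselJ_eq (by linarith) hz.le,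
    besselJ_eq (by linarith) hz.le, Real.rpow_add_one h2.ne', Real.rpow_sub_one h2.ne',
    besselAux_recurrence hν]
  field_simp
  ring

/-- `J_ν' = J_{ν-1} - (ν/z) J_ν`. -/
theorem hasDerivAt_besselJ_lower {ν z : ℝ} (hν : 1 ≤ ν) (hz : 0 < z) :
    HasDerivAt (besselJ ν) (besselJ (ν - 1) z - ν / z * besselJ ν z) z := by
  convert hasDerivAt_besselJ (by linarith : 0 ≤ ν) hz using 1
  rw [besselJ_recurrence hν hz]
  ring

/-- `J_{ν-1}' = ((ν-1)/z) J_{ν-1} - J_ν`. -/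
theorem hasDerivAt_besselJ_sub_one {ν z : ℝ} (hν : 1 ≤ ν) (hz : 0 < z) :
    HasDerivAt (besselJ (ν - 1)) ((ν - 1) / z * besselJ (ν - 1) z - besselJ ν z) z := by
  have := hasDerivAt_besselJ (by linarith : 0 ≤ ν - 1) hz
  rwa [sub_add_cancel] at this

theorem pos_of_hasDerivAt_pos {f f' : ℝ → ℝ} {a : ℝ} (hf : ContinuousOn f (Ici 0)) (h0 : f 0 = 0)
    (hd : ∀ z ∈ Ioo 0 a, HasDerivAt f (f' z) z) (hpos : ∀ z ∈ Ioo 0 a, 0 < f' z) :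
    ∀ z ∈ Ioc 0 a, 0 < f z := by
  have hmono : StrictMonoOn f (Icc 0 a) := by
    refine strictMonoOn_of_deriv_pos (convex_Icc 0 a) (hf.mono Icc_subset_Ici_self) fun z hz => ?_
    rw [interior_Icc] at hz
    rw [(hd z hz).deriv]
    exact hpos z hz
  intro z hz
  have := hmono ⟨le_rfl, hz.1.le.trans hz.2⟩ ⟨hz.1.le, hz.2⟩ hz.1
  rwa [h0] at this

theorem besselJ_pos_of_no_zero {ν a : ℝ} (hν : 0 ≤ ν) (h : ∀ z ∈ Ioo 0 a, besselJ ν z ≠ 0) :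
    ∀ z ∈ Ioo 0 a, 0 < besselJ ν z := by
  intro z hz
  have hg : 0 < besselAux ν ((z / 2) ^ 2) := by
    by_contra! hle
    have hc : ContinuousOn (fun y : ℝ => besselAux ν ((y / 2) ^ 2)) (Icc 0 z) :=
      ((continuous_besselAux hν).comp (by fun_prop : Continuous fun y : ℝ => (y / 2) ^ 2)).continuousOn
    have h0 : 0 < besselAux ν ((0 / 2 : ℝ) ^ 2) := by simpa using besselAux_zero_pos hν
    obtain ⟨y, hy, hy0⟩ := intermediate_value_Icc' hz.1.le hc ⟨hle, h0.le⟩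
    simp only at hy0
    have hypos : 0 < y := by
      rcases hy.1.eq_or_lt with rfl | h'
      · exact absurd hy0 h0.ne'
      · exact h'
    exact h y ⟨hypos, hy.2.trans_lt hz.2⟩ (by rw [besselJ_eq hν hypos.le, hy0, mul_zero])
  rw [besselJ_eq hν hz.1.le]
  exact mul_pos (Real.rpow_pos_of_pos (by linarith [hz.1]) _) hg

section

variable {ν a : ℝ}

theorem besselJ_pos_of_lower_pos (hν : 1 ≤ ν) (hA : ∀ z ∈ Ioo 0 a, 0 < besselJ (ν - 1) z) :
    ∀ z ∈ Ioc 0 a, 0 < besselJ ν z := by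
  have hν0 : 0 < ν := by linarith
  intro z hz
  have := pos_of_hasDerivAt_pos (f := fun z => z ^ ν * besselJ ν z)
    (f' := fun z => z ^ ν * besselJ (ν - 1) z) (a := a)
    ((continuousOn_id.rpow_const fun _ _ => Or.inr hν0.le).mul (continuousOn_besselJ hν0.le))
    (by simp [Real.zero_rpow hν0.ne'])
    (fun z hz => by
      have h := (Real.hasDerivAt_rpow_const (x := z) (p := ν) (Or.inl hz.1.ne')).mul
        (hasDerivAt_besselJ_lower hν hz.1)
      refine h.congr_deriv ?_
      have := hz.1.ne'
      rw [Real.rpow_sub_one this]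
      field_simp
      ring)
    (fun z hz => mul_pos (Real.rpow_pos_of_pos hz.1 _) (hA z hz)) z hz
  exact pos_of_mul_pos_right this (Real.rpow_nonneg hz.1.le _)

theorem besselJ_quadratic_pos (hν : 1 ≤ ν) (hA : ∀ z ∈ Ioo 0 a, 0 < besselJ (ν - 1) z) :
    ∀ z ∈ Ioc 0 a, 0 < z * (besselJ (ν - 1) z ^ 2 + besselJ ν z ^ 2)
      - (2 * ν - 1) * (besselJ (ν - 1) z * besselJ ν z) := by
  have hcA := continuousOn_besselJ (by linarith : 0 ≤ ν - 1)
  have hcB := continuousOn_besselJ (by linarith : 0 ≤ ν)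
  refine pos_of_hasDerivAt_pos
    (f := fun z => z * (besselJ (ν - 1) z ^ 2 + besselJ ν z ^ 2)
      - (2 * ν - 1) * (besselJ (ν - 1) z * besselJ ν z))
    (f' := fun z => (2 * ν - 1) * (besselJ (ν - 1) z * besselJ ν z) / z)
    ((continuousOn_id.mul ((hcA.pow 2).add (hcB.pow 2))).sub ((hcA.mul hcB).const_mul _))
    (by simp [besselJ_zero_right (by linarith : 0 < ν)]) (fun z hz => ?_) (fun z hz => ?_)
  · have dA := hasDerivAt_besselJ_sub_one hν hz.1
    have dB := hasDerivAt_besselJ_lower hν hz.1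
    refine (((hasDerivAt_id z).mul ((dA.pow 2).add (dB.pow 2))).sub
      ((dA.mul dB).const_mul (2 * ν - 1))).congr_deriv ?_
    have := hz.1.ne'
    simp only [id, Pi.add_apply, Pi.pow_apply]
    field_simp
    ring
  · have := hA z hz
    have := besselJ_pos_of_lower_pos hν hA z ⟨hz.1, hz.2.le⟩
    have := hz.1
    have : 0 < 2 * ν - 1 := by linarith
    positivity

/-- `J_ν / J_{ν-1}` increases strictly up to the first zero of `J_{ν-1}`. -/
theorem strictMonoOn_besselJ_ratio (hν : 1 ≤ ν) (hA : ∀ z ∈ Ioo 0 a, 0 < besselJ (ν - 1) z) :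
    StrictMonoOn (fun z => besselJ ν z / besselJ (ν - 1) z) (Ioo 0 a) := by
  have hd (z : ℝ) (hz : z ∈ Ioo 0 a) := (hasDerivAt_besselJ_lower hν hz.1).div
    (hasDerivAt_besselJ_sub_one hν hz.1) (hA z hz).ne'
  refine strictMonoOn_of_deriv_pos (convex_Ioo 0 a)
    (fun z hz => (hd z hz).continuousAt.continuousWithinAt) fun z hz => ?_
  rw [interior_Ioo] at hz
  have e : deriv (fun z => besselJ ν z / besselJ (ν - 1) z) z = _ := (hd z hz).deriv
  rw [e]
  have hW := besselJ_quadratic_pos hν hA z ⟨hz.1, hz.2.le⟩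
  have hz0 := hz.1
  refine div_pos ?_ (pow_pos (hA z hz) 2)
  convert div_pos hW hz0 using 1
  field_simp
  ring

/-- `z J_ν'(z) > 0` for `z ≤ ν`. -/
theorem mul_deriv_besselJ_pos (hν : 1 ≤ ν) (hA : ∀ z ∈ Ioo 0 a, 0 < besselJ (ν - 1) z) {z : ℝ}
    (hz : 0 < z) (hza : z ≤ a) (hzν : z ≤ ν) :
    0 < z * besselJ (ν - 1) z - ν * besselJ ν z := by
  have hcA := continuousOn_besselJ (by linarith : 0 ≤ ν - 1)
  have hcB := continuousOn_besselJ (by linarith : 0 ≤ ν)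
  refine pos_of_hasDerivAt_pos (a := z)
    (f := fun z => z * besselJ (ν - 1) z - ν * besselJ ν z)
    (f' := fun z => (ν ^ 2 - z ^ 2) * besselJ ν z / z)
    ((continuousOn_id.mul hcA).sub (hcB.const_mul _))
    (by simp [besselJ_zero_right (by linarith : 0 < ν)]) (fun y hy => ?_) (fun y hy => ?_)
    z ⟨hz, le_rfl⟩
  · have dA := hasDerivAt_besselJ_sub_one hν hy.1
    have dB := hasDerivAt_besselJ_lower hν hy.1
    refine (((hasDerivAt_id y).mul dA).sub (dB.const_mul ν)).congr_deriv ?_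
    have := hy.1.ne'
    simp only [id]
    field_simp
    ring
  · have h1 := besselJ_pos_of_lower_pos hν hA y ⟨hy.1, hy.2.le.trans hza⟩
    have h2 : 0 < ν ^ 2 - y ^ 2 := by nlinarith [hy.1, hy.2]
    have := hy.1
    positivity

theorem exists_besselJ_sub_zero (hν : 1 ≤ ν) (ha : 0 < a) (ha0 : besselJ (ν - 1) a = 0)
    (hB : 0 < besselJ ν a) : ∃ z ∈ Ioo 0 a, besselJ (ν - 1) z - besselJ ν z = 0 := by
  have hν1 : 0 ≤ ν - 1 := by linarith
  have hν0 : 0 ≤ ν := by linarith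
  set h : ℝ → ℝ := fun z => besselAux (ν - 1) ((z / 2) ^ 2) - z / 2 * besselAux ν ((z / 2) ^ 2)
    with hh
  have hfac {z : ℝ} (hz : 0 < z) :
      besselJ (ν - 1) z - besselJ ν z = (z / 2) ^ (ν - 1) * h z := by
    have : (z / 2) ^ ν = (z / 2) ^ (ν - 1) * (z / 2) := by
      rw [← Real.rpow_add_one (by positivity), sub_add_cancel]
    rw [besselJ_eq hν1 hz.le, besselJ_eq hν0 hz.le, this, hh]
    ring
  have hc : Continuous h :=
    ((continuous_besselAux hν1).comp (by fun_prop : Continuous fun y : ℝ => (y / 2) ^ 2)).sub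
      ((continuous_id.div_const 2).mul
        ((continuous_besselAux hν0).comp (by fun_prop : Continuous fun y : ℝ => (y / 2) ^ 2)))
  have h0 : 0 < h 0 := by simpa [hh] using besselAux_zero_pos hν1
  have h1 : h a < 0 := by
    have := hfac ha
    have hp : 0 < (a / 2) ^ (ν - 1) := Real.rpow_pos_of_pos (by positivity) _
    by_contra! hle
    nlinarith [mul_nonneg hp.le hle]
  obtain ⟨z, hz, hz0⟩ := intermediate_value_Ioo' ha.le hc.continuousOn ⟨h1, h0⟩
  exact ⟨z, hz, by rw [hfac hz.1, hz0, mul_zero]⟩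

end

/-- `J_μ'` vanishes somewhere in `(0, b)` if `J_μ(b) > 0` and `J_μ'(b) < 0`. -/
theorem exists_deriv_besselJ_zero {μ b : ℝ} (hμ : 0 < μ) (hb : 0 < b) (hpos : 0 < besselJ μ b)
    (hneg : deriv (besselJ μ) b < 0) : ∃ z ∈ Ioo 0 b, deriv (besselJ μ) z = 0 := by
  have hd (z : ℝ) (hz : 0 < z) : DifferentiableAt ℝ (besselJ μ) z :=
    (hasDerivAt_besselJ hμ.le hz).differentiableAt
  obtain ⟨x, hx, hx'⟩ := exists_deriv_eq_slope (besselJ μ) hb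
    ((continuousOn_besselJ hμ.le).mono Icc_subset_Ici_self)
    (fun z hz => (hd z hz.1).differentiableWithinAt)
  have hxpos : 0 < deriv (besselJ μ) x := by
    rw [hx', besselJ_zero_right hμ, sub_zero, sub_zero]
    positivity
  have hc : ContinuousOn (deriv (besselJ μ)) (Icc x b) := by
    have hpos' (z : ℝ) (hz : z ∈ Icc x b) : 0 < z := hx.1.trans_le hz.1
    have : ContinuousOn (fun z => μ / z * besselJ μ z - besselJ (μ + 1) z) (Icc x b) :=
      ((continuousOn_const.div continuousOn_id fun z hz => (hpos' z hz).ne').mul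
        ((continuousOn_besselJ hμ.le).mono fun z hz => (hpos' z hz).le)).sub
        ((continuousOn_besselJ (by linarith)).mono fun z hz => (hpos' z hz).le)
    exact this.congr fun z hz => (hasDerivAt_besselJ hμ.le (hpos' z hz)).deriv
  obtain ⟨z, hz, hz0⟩ := intermediate_value_Ioo' hx.2.le hc ⟨hneg, hxpos⟩
  exact ⟨z, ⟨hx.1.trans hz.1, hz.2⟩, hz0⟩

theorem isKthElement_one_iff {S : Set ℝ} {x : ℝ} : IsKthElement S 1 x ↔ IsLeast S x := by
  have h : (S ∩ Iio x).encard + 1 = ((1 : ℕ) : ℕ∞) ↔ S ∩ Iio x = ∅ := by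
    rw [← encard_eq_zero]
    simp
  rw [IsKthElement, h, IsLeast]
  refine and_congr_right fun _ => ⟨fun h y hy => ?_, fun h => ?_⟩
  · by_contra! hlt
    exact (h ▸ (⟨hy, hlt⟩ : y ∈ S ∩ Iio x) : y ∈ (∅ : Set ℝ))
  · exact eq_empty_of_forall_notMem fun y hy => (h hy.1).not_gt hy.2

/-- For `ν ≥ 1`, with `jm = j_{ν-1,1}`, `jn = j_{ν,1}`, `jm' = j′_{ν-1,1}`, `jn' = j′_{ν,1}`:
`J_{ν-1} - J_ν` has exactly one zero in `(0, j_{ν-1,1})`; this zero is `lam = λ⁻_{ν-1,1}`, and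
`j′_{ν-1,1} < λ⁻_{ν-1,1} < j_{ν-1,1}` and `ν < λ⁻_{ν-1,1} < j′_{ν,1} < j_{ν,1}`. -/
theorem stmt4 (ν : ℝ) (hν : 1 ≤ ν) (jm jn jm' jn' : ℝ)
    (hjm : IsKthElement (posZeros (besselJ (ν - 1))) 1 jm)
    (hjn : IsKthElement (posZeros (besselJ ν)) 1 jn)
    (hjm' : IsKthElement (derivZeros (ν - 1)) 1 jm')
    (hjn' : IsKthElement (derivZeros ν) 1 jn') :
    ∃ lam : ℝ,
      IsKthElement (posZeros (fun z => besselJ (ν - 1) z - besselJ ν z)) 1 lam ∧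
      (∀ z ∈ Set.Ioo (0 : ℝ) jm, besselJ (ν - 1) z - besselJ ν z = 0 ↔ z = lam) ∧
      (jm' < lam ∧ lam < jm) ∧
      (ν < lam ∧ lam < jn' ∧ jn' < jn) := by
  rw [isKthElement_one_iff] at hjm hjn hjm' hjn'
  have hν0 : 0 < ν := by linarith
  have hν1 : 0 ≤ ν - 1 := by linarith
  obtain ⟨⟨hm, hm0⟩, hmin⟩ := hjm
  have hA : ∀ z ∈ Ioo 0 jm, 0 < besselJ (ν - 1) z :=
    besselJ_pos_of_no_zero hν1 fun z hz h0 => (hmin ⟨hz.1, h0⟩).not_gt hz.2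
  have hB := besselJ_pos_of_lower_pos hν hA
  have hr := strictMonoOn_besselJ_ratio hν hA
  obtain ⟨lam, hlam, hlam0⟩ := exists_besselJ_sub_zero hν hm hm0 (hB jm ⟨hm, le_rfl⟩)
  have hAl := hA lam hlam
  have heq : besselJ ν lam = besselJ (ν - 1) lam := by linarith
  have huniq : ∀ z ∈ Ioo (0 : ℝ) jm, besselJ (ν - 1) z - besselJ ν z = 0 ↔ z = lam := by
    refine fun z hz => ⟨fun h0 => hr.injOn hz hlam ?_, fun h => h ▸ hlam0⟩
    have : besselJ ν z = besselJ (ν - 1) z := by linarith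
    simp only [this, heq, div_self (hA z hz).ne', div_self hAl.ne']
  have hνlam : ν < lam := by
    by_contra! hle
    have := mul_deriv_besselJ_pos hν hA hlam.1 hlam.2.le hle
    rw [heq] at this
    nlinarith
  refine ⟨lam, ?_, huniq, ⟨?_, hlam.2⟩, hνlam, ?_, ?_⟩
  · refine isKthElement_one_iff.mpr ⟨⟨hlam.1, hlam0⟩, fun y hy => ?_⟩
    by_contra! hlt
    exact hlt.ne ((huniq y ⟨hy.1, hlt.trans hlam.2⟩).mp hy.2)
  · rcases hν1.eq_or_lt with h0 | hpos
    · exact (hjm'.2 (Or.inr ⟨h0.symm, rfl⟩)).trans_lt hlam.1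
    · have hneg : deriv (besselJ (ν - 1)) lam < 0 := by
        rw [(hasDerivAt_besselJ_sub_one hν hlam.1).deriv, heq]
        have : (ν - 1) / lam < 1 := (div_lt_one hlam.1).mpr (by linarith)
        nlinarith
      obtain ⟨z, hz, hz0⟩ := exists_deriv_besselJ_zero hpos hlam.1 hAl hneg
      exact (hjm'.2 (Or.inl ⟨hz.1, hz0⟩)).trans_lt hz.2
  · obtain ⟨hc, hc0⟩ : jn' ∈ posZeros (deriv (besselJ ν)) :=
      hjn'.1.resolve_right fun h => hν0.ne' h.1
    rcases le_or_gt jm jn' with hle | hlt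
    · exact hlam.2.trans_le hle
    · have hcm : jn' ∈ Ioo 0 jm := ⟨hc, hlt⟩
      rw [(hasDerivAt_besselJ_lower hν hc).deriv] at hc0
      have hP : jn' * besselJ (ν - 1) jn' = ν * besselJ ν jn' := by
        field_simp at hc0
        linarith
      have hνc : ν < jn' := by
        by_contra! hle
        linarith [mul_deriv_besselJ_pos hν hA hc hlt.le hle]
      have hlt' : besselJ (ν - 1) jn' < besselJ ν jn' := by
        nlinarith [hB jn' ⟨hc, hlt.le⟩]
      refine (hr.lt_iff_lt hlam hcm).mp ?_
      simp only [heq, div_self hAl.ne']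
      exact (one_lt_div (hA jn' hcm)).mpr hlt'
  · obtain ⟨z, hz, hz0⟩ := exists_deriv_eq_zero hjn.1.1
      ((continuousOn_besselJ hν0.le).mono Icc_subset_Ici_self)
      (by rw [besselJ_zero_right hν0, hjn.1.2])
    exact (hjn'.2 (Or.inl ⟨hz.1, hz0⟩)).trans_lt hz.2
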